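/- State transition from (S4): if the pair of SpaceSaving states on neighboring streams is in state (S4) at time t−1 (with t−1 ≥ i and t ≤ T), then after processing the common update x_t the pair is in state (S2), (S3), or (S4) at time t. -/

import Mathlib

/-- State of the SpaceSaving algorithm: tracked set, counters (0 for untracked
items), and recency (last occurrence time, 0 if never seen). -/
structure SSState (α : Type) where
  tracked : Finset α
  count : α → ℕ
  recency : α → ℕ

variable {α : Type} [LinearOrder α]

/-- The set of tracked items of minimum counter value. -/
def ssMinSet (s : SSState α) : Finset α :=
  s.tracked.filter (fun a => ∀ b ∈ s.tracked, s.count a ≤ s.count b)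

/-- The eviction victim: among tracked items of minimum counter value, the one
with the largest recency (ties in recency broken by the order on `α`). -/
def ssEvict (s : SSState α) : Option α :=
  if h : ((ssMinSet s).filter (fun a => ∀ b ∈ ssMinSet s, s.recency b ≤ s.recency a)).Nonempty
  then some (((ssMinSet s).filter (fun a => ∀ b ∈ ssMinSet s, s.recency b ≤ s.recency a)).max' h)
  else none

/-- One step of SpaceSaving with capacity `k` at time `t`; a `none` update
contributes nothing. -/
def ssStep (k t : ℕ) (s : SSState α) : Option α → SSState α
  | none => s
  | some x =>
    if x ∈ s.tracked then
      ⟨s.tracked, Function.update s.count x (s.count x + 1), Function.update s.recency x t⟩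
    else if s.tracked.card < k then
      ⟨insert x s.tracked, Function.update s.count x 1, Function.update s.recency x t⟩
    else
      match ssEvict s with
      | none => s
      | some y =>
        ⟨insert x (s.tracked.erase y),
         Function.update (Function.update s.count y 0) x (s.count y + 1),
         Function.update s.recency x t⟩

def ssRunAux (k : ℕ) : SSState α → ℕ → List (Option α) → SSState α
  | s, _, [] => s
  | s, t, x :: xs => ssRunAux k (ssStep k t s x) (t + 1) xs

/-- Run SpaceSaving with capacity `k` on a stream (positions are 1-indexed). -/
def ssRun (k : ℕ) (X : List (Option α)) : SSState α :=
  ssRunAux k ⟨∅, fun _ => 0, fun _ => 0⟩ 1 X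

section NeighborStates

variable {α : Type} [LinearOrder α]

/-- State (S1) of the pair of SpaceSaving data structures on neighboring streams:
(a) the tracked sets coincide; (b) there is `y ∈ T` with `C[y] = C'[y] + 1`;
(c) all other tracked counters coincide. -/
def StateS1 (s s' : SSState α) : Prop :=
  s.tracked = s'.tracked ∧
  ∃ y ∈ s.tracked, s.count y = s'.count y + 1 ∧
    ∀ z ∈ s.tracked, z ≠ y → s.count z = s'.count z

/-- State (S2): (a) `T ≠ T'` with `T \ T' = {z}` and `T' \ T = {z'}`;
(b) counters agree on `T ∩ T'`; (c) `C[z] = C'[z'] + 1`, `z'` attains the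
minimum counter in `T'`, and `C[z] ≤ min_{a ∈ T} C[a] + 1`. -/
def StateS2 (s s' : SSState α) : Prop :=
  s.tracked ≠ s'.tracked ∧
  ∃ z z' : α,
    s.tracked \ s'.tracked = {z} ∧ s'.tracked \ s.tracked = {z'} ∧
    (∀ a ∈ s.tracked ∩ s'.tracked, s.count a = s'.count a) ∧
    s.count z = s'.count z' + 1 ∧
    (∀ a ∈ s'.tracked, s'.count z' ≤ s'.count a) ∧
    (∀ a ∈ s.tracked, s.count z ≤ s.count a + 1)

/-- State (S3): (a) `T ≠ T'` with `T \ T' = {z}` and `T' \ T = {z'}`;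
(b) there is `y ∈ T ∩ T'` with `C[y] = C'[y] + 1` and the counters agree on the
rest of the intersection; (c) `C[z] = C'[z']` and both attain the minimum
counter value of their respective tracked sets. -/
def StateS3 (s s' : SSState α) : Prop :=
  s.tracked ≠ s'.tracked ∧
  ∃ z z' : α,
    s.tracked \ s'.tracked = {z} ∧ s'.tracked \ s.tracked = {z'} ∧
    (∃ y ∈ s.tracked ∩ s'.tracked, s.count y = s'.count y + 1 ∧
      ∀ a ∈ s.tracked ∩ s'.tracked, a ≠ y → s.count a = s'.count a) ∧
    s.count z = s'.count z' ∧
    (∀ a ∈ s.tracked, s.count z ≤ s.count a) ∧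
    (∀ a ∈ s'.tracked, s'.count z' ≤ s'.count a)

/-- State (S4): (a) `T ≠ T'` with `T \ T' = {z₁, z₂}` and `T' \ T = {z₁', z₂'}`;
(b) counters agree on `T ∩ T'`;
(c) `C[z₁] − 1 = C[z₂] = C'[z₁'] = C'[z₂'] = min_{a∈T} C[a] = min_{a∈T'} C'[a]`;
(d) among the minimum-count items of `T'`, the one with largest recency (the
eviction victim of the primed run) belongs to `W' = T' \ T`. -/
def StateS4 (s s' : SSState α) : Prop :=
  s.tracked ≠ s'.tracked ∧
  ∃ z₁ z₂ z₁' z₂' : α, z₁ ≠ z₂ ∧ z₁' ≠ z₂' ∧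
    s.tracked \ s'.tracked = {z₁, z₂} ∧ s'.tracked \ s.tracked = {z₁', z₂'} ∧
    (∀ a ∈ s.tracked ∩ s'.tracked, s.count a = s'.count a) ∧
    s.count z₁ = s.count z₂ + 1 ∧
    s.count z₂ = s'.count z₁' ∧ s'.count z₁' = s'.count z₂' ∧
    (∀ a ∈ s.tracked, s.count z₂ ≤ s.count a) ∧
    (∀ a ∈ s'.tracked, s'.count z₁' ≤ s'.count a) ∧
    (∃ w, ssEvict s' = some w ∧ w ∈ s'.tracked \ s.tracked)

end NeighborStates

variable {α : Type} [LinearOrder α]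

/-- The SpaceSaving state after processing the first `t` positions of the
stream `X` (capacity `k`, positions 1-indexed). -/
def ssNbState (k : ℕ) (X : List α) (t : ℕ) : SSState α :=
  ssRun k ((X.map some).take t)

/-- The SpaceSaving state after processing the first `t` positions of the
neighboring stream `X′`, which is `X` with the single update at (1-indexed)
position `i` removed, i.e. replaced by an empty update contributing nothing. -/
def ssNbState' (k : ℕ) (X : List α) (i t : ℕ) : SSState α :=
  ssRun k (((X.map some).set (i - 1) none).take t)

/-- `y` is tracked, has minimum counter value, and is the latest such item, ties in recency
being broken by the order on `α`. -/
def IsVictim {α : Type} [LinearOrder α] (s : SSState α) (y : α) : Prop :=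
  y ∈ s.tracked ∧ (∀ b ∈ s.tracked, s.count y ≤ s.count b) ∧
    ∀ b ∈ s.tracked, s.count b ≤ s.count y →
      s.recency b < s.recency y ∨ (s.recency b = s.recency y ∧ b ≤ y)

theorem mem_ssMinSet {α : Type} [LinearOrder α] {s : SSState α} {a : α} :
    a ∈ ssMinSet s ↔ a ∈ s.tracked ∧ ∀ b ∈ s.tracked, s.count a ≤ s.count b :=
  Finset.mem_filter

theorem isVictim_of_ssEvict {α : Type} [LinearOrder α] {s : SSState α} {y : α}
    (h : ssEvict s = some y) : IsVictim s y := by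
  unfold ssEvict at h
  split_ifs at h with hne
  obtain ⟨hy, hyrec⟩ := Finset.mem_filter.1 (Finset.max'_mem _ hne)
  have hmax : ∀ b ∈ ssMinSet s, (∀ c ∈ ssMinSet s, s.recency c ≤ s.recency b) →
      b ≤ Finset.max' _ hne :=
    fun b hb hbr => Finset.le_max' _ b (Finset.mem_filter.2 ⟨hb, hbr⟩)
  rw [Option.some.inj h] at hy hyrec hmax
  obtain ⟨hyT, hymin⟩ := mem_ssMinSet.1 hy
  refine ⟨hyT, hymin, fun b hb hbc => ?_⟩
  have hbmin : b ∈ ssMinSet s := mem_ssMinSet.2 ⟨hb, fun c hc => hbc.trans (hymin c hc)⟩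
  rcases (hyrec b hbmin).lt_or_eq with hlt | heq
  · exact Or.inl hlt
  · exact Or.inr ⟨heq, hmax b hbmin fun c hc => heq ▸ hyrec c hc⟩

theorem exists_ssEvict {α : Type} [LinearOrder α] {s : SSState α} (h : s.tracked.Nonempty) :
    ∃ y, ssEvict s = some y ∧ IsVictim s y := by
  have hne : ((ssMinSet s).filter
      (fun a => ∀ b ∈ ssMinSet s, s.recency b ≤ s.recency a)).Nonempty := by
    obtain ⟨a, ha, hamin⟩ := s.tracked.exists_min_image s.count h
    have hm : (ssMinSet s).Nonempty := ⟨a, mem_ssMinSet.2 ⟨ha, hamin⟩⟩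
    obtain ⟨b, hb, hbmax⟩ := (ssMinSet s).exists_max_image s.recency hm
    exact ⟨b, Finset.mem_filter.2 ⟨hb, hbmax⟩⟩
  have he : ssEvict s = some (Finset.max' _ hne) := by
    unfold ssEvict
    rw [dif_pos hne]
  exact ⟨_, he, isVictim_of_ssEvict he⟩

theorem ssStep_of_mem {α : Type} [LinearOrder α] {k t : ℕ} {s : SSState α} {x : α}
    (h : x ∈ s.tracked) :
    ssStep k t s (some x) = ⟨s.tracked, Function.update s.count x (s.count x + 1),
      Function.update s.recency x t⟩ := by
  simp [ssStep, h]

theorem ssStep_of_ssEvict {α : Type} [LinearOrder α] {k t : ℕ} {s : SSState α} {x y : α}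
    (h : x ∉ s.tracked) (hk : k ≤ s.tracked.card) (hy : ssEvict s = some y) :
    ssStep k t s (some x) = ⟨insert x (s.tracked.erase y),
      Function.update (Function.update s.count y 0) x (s.count y + 1),
      Function.update s.recency x t⟩ := by
  simp [ssStep, h, hk.not_gt, hy]

/-- The coupling between the two runs: a commonly tracked item with different recencies has
a counter larger by one in the first run, and as long as the first run has spare capacity it tracks
everything tracked by the second. -/
def Coupled {α : Type} (k : ℕ) (s s' : SSState α) : Prop :=
  (∀ a ∈ s.tracked, a ∈ s'.tracked → s.recency a ≠ s'.recency a → s.count a = s'.count a + 1) ∧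
    (s.tracked.card < k → s'.tracked ⊆ s.tracked)

theorem ssStep_tracked_subset {α : Type} [LinearOrder α] (k t : ℕ) (s : SSState α) (x : α) :
    (ssStep k t s (some x)).tracked ⊆ insert x s.tracked := by
  intro a ha
  unfold ssStep at ha
  grind

theorem ssStep_count_of_ne {α : Type} [LinearOrder α] {k t : ℕ} {s : SSState α} {x a : α}
    (hax : a ≠ x) (ha : a ∈ (ssStep k t s (some x)).tracked) :
    (ssStep k t s (some x)).count a = s.count a := by
  unfold ssStep at ha ⊢
  dsimp only at ha ⊢
  split_ifs at ha ⊢ with h₁ h₂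
  · simp [hax]
  · simp [hax]
  · cases hy : ssEvict s with
    | none => rfl
    | some y =>
      have hay : a ≠ y := by
        rintro rfl
        simp [hy, hax] at ha
      simp [hax, hay]

theorem ssStep_recency {α : Type} [LinearOrder α] {k : ℕ} (hk : 1 ≤ k) (t : ℕ) (s : SSState α)
    (x : α) : (ssStep k t s (some x)).recency = Function.update s.recency x t := by
  by_cases hx : x ∈ s.tracked
  · rw [ssStep_of_mem hx]
  · by_cases hc : s.tracked.card < k
    · simp [ssStep, hx, hc]
    · obtain ⟨y, hy, -⟩ := exists_ssEvict (s := s) (Finset.card_pos.1 (by omega))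
      rw [ssStep_of_ssEvict hx (by omega) hy]

theorem insert_subset_ssStep_tracked {α : Type} [LinearOrder α] {k t : ℕ} {s : SSState α} {x : α}
    (h : (ssStep k t s (some x)).tracked.card < k) :
    s.tracked.card < k ∧ insert x s.tracked ⊆ (ssStep k t s (some x)).tracked := by
  by_cases hx : x ∈ s.tracked
  · rw [ssStep_of_mem hx] at h ⊢
    exact ⟨h, by simp [hx]⟩
  · by_cases hc : s.tracked.card < k
    · simp [ssStep, hx, hc]
    · exfalso
      obtain ⟨y, hy, hyv⟩ := exists_ssEvict (s := s) (Finset.card_pos.1 (by omega))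
      rw [ssStep_of_ssEvict hx (by omega) hy] at h
      have h1 := Finset.card_erase_add_one hyv.1
      have h2 : x ∉ s.tracked.erase y := fun hm => hx (Finset.mem_of_mem_erase hm)
      simp only [Finset.card_insert_of_notMem h2] at h
      omega

theorem Coupled.step {α : Type} [LinearOrder α] {k : ℕ} (hk : 1 ≤ k) {s s' : SSState α}
    (h : Coupled k s s') (t : ℕ) (x : α) :
    Coupled k (ssStep k t s (some x)) (ssStep k t s' (some x)) := by
  refine ⟨fun a ha ha' hr => ?_, fun hc => ?_⟩
  · rw [ssStep_recency hk, ssStep_recency hk] at hr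
    have hax : a ≠ x := by
      rintro rfl
      simp at hr
    rw [ssStep_count_of_ne hax ha, ssStep_count_of_ne hax ha']
    refine h.1 a ?_ ?_ (by simpa [hax] using hr)
    · simpa [hax] using ssStep_tracked_subset k t s x ha
    · simpa [hax] using ssStep_tracked_subset k t s' x ha'
  · obtain ⟨hc', hsub⟩ := insert_subset_ssStep_tracked hc
    exact (ssStep_tracked_subset k t s' x).trans
      ((Finset.insert_subset_insert x (h.2 hc')).trans hsub)

theorem coupled_ssStep_self {α : Type} [LinearOrder α] {k : ℕ} (hk : 1 ≤ k) (s : SSState α)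
    (t : ℕ) (x : α) : Coupled k (ssStep k t s (some x)) s := by
  refine ⟨fun a _ ha' hr => ?_, fun hc => ?_⟩
  · rw [ssStep_recency hk] at hr
    have hax : a = x := by
      by_contra hax
      simp [hax] at hr
    subst hax
    simp [ssStep_of_mem ha']
  · exact (Finset.subset_insert x _).trans (insert_subset_ssStep_tracked hc).2

theorem StateS4.step {α : Type} [LinearOrder α] {k : ℕ} {s s' : SSState α}
    (hc : Coupled k s s') (h : StateS4 s s') (t : ℕ) (x : α) :
    StateS2 (ssStep k t s (some x)) (ssStep k t s' (some x)) ∨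
    StateS3 (ssStep k t s (some x)) (ssStep k t s' (some x)) ∨
    StateS4 (ssStep k t s (some x)) (ssStep k t s' (some x)) := by
  obtain ⟨-, z₁, z₂, z₁', z₂', hz, hz', hW, hW', hcnt, h1, h2, h2', hmin, hmin', w, hw, hwW⟩ := h
  obtain ⟨v, hvw, hW'v, hvc, hwc⟩ : ∃ v, v ≠ w ∧ s'.tracked \ s.tracked = {v, w} ∧
      s'.count v = s.count z₂ ∧ s'.count w = s.count z₂ := by
    rw [hW', Finset.mem_insert, Finset.mem_singleton] at hwW
    rcases hwW with rfl | rfl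
    · exact ⟨z₂', hz'.symm, by rw [hW', Finset.pair_comm], by omega, by omega⟩
    · exact ⟨z₁', hz', hW', by omega, by omega⟩
  rw [← h2] at hmin'
  clear hwW hW' h2 h2' hz'
  have hcard : s.tracked.card = s'.tracked.card := by
    rw [← Finset.card_sdiff_eq_card_sdiff_iff, hW, hW'v, Finset.card_pair hz, Finset.card_pair hvw]
  simp only [Finset.ext_iff, Finset.mem_sdiff, Finset.mem_insert, Finset.mem_singleton,
    Finset.mem_inter] at hW hW'v hcnt
  have hz1 := (hW z₁).2 (Or.inl rfl)
  have hz2 := (hW z₂).2 (Or.inr rfl)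
  have hv := (hW'v v).2 (Or.inl rfl)
  have hwm := (hW'v w).2 (Or.inr rfl)
  have hfull : k ≤ s.tracked.card := by
    by_contra hlt
    exact hv.2 (hc.2 (not_le.1 hlt) hv.1)
  have hfull' : k ≤ s'.tracked.card := hcard ▸ hfull
  obtain ⟨-, -, hwr⟩ := isVictim_of_ssEvict hw
  obtain ⟨y, hy, hyT, hymin, hyr⟩ := exists_ssEvict (s := s) ⟨_, hz1.1⟩
  have hyc : s.count y = s.count z₂ := le_antisymm (hymin _ hz2.1) (hmin _ hyT)
  have hrec : ∀ a ∈ s.tracked, a ∈ s'.tracked → s.recency a = s'.recency a := by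
    intro a ha ha'
    by_contra hr
    have := hc.1 a ha ha' hr
    have := hcnt a ⟨ha, ha'⟩
    omega
  by_cases hx : x ∈ s.tracked <;> by_cases hx' : x ∈ s'.tracked
  · right; right
    rw [ssStep_of_mem hx, ssStep_of_mem hx']
    set r' : SSState α := ⟨s'.tracked, Function.update s'.count x (s'.count x + 1),
      Function.update s'.recency x t⟩ with hr'
    obtain ⟨u, hu, huT, humin, hur⟩ := exists_ssEvict (s := r') ⟨_, hv.1⟩
    refine ⟨ne_of_mem_of_not_mem' (a := z₁) (by grind) (by grind),
      z₁, z₂, v, w, hz, hvw, ?_, ?_, ?_, ?_, ?_, ?_, ?_, ?_, u, hu, ?_⟩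
    all_goals simp only [hr', Finset.ext_iff, Finset.mem_sdiff, Finset.mem_insert,
      Finset.mem_singleton, Finset.mem_inter, Function.update_apply] at *
    all_goals grind
  · rw [ssStep_of_mem hx, ssStep_of_ssEvict hx' hfull' hw]
    rcases (hW x).1 ⟨hx, hx'⟩ with rfl | rfl
    · right; left
      refine ⟨ne_of_mem_of_not_mem' (a := z₂) (by grind) (by grind),
        z₂, v, ?_, ?_, ⟨x, ?_, ?_, ?_⟩, ?_, ?_, ?_⟩
      all_goals simp only [Finset.ext_iff, Finset.mem_sdiff, Finset.mem_insert, Finset.mem_erase,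
        Finset.mem_singleton, Finset.mem_inter, Function.update_apply] at *
      all_goals grind
    · left
      refine ⟨ne_of_mem_of_not_mem' (a := z₁) (by grind) (by grind),
        z₁, v, ?_, ?_, ?_, ?_, ?_, ?_⟩
      all_goals simp only [Finset.ext_iff, Finset.mem_sdiff, Finset.mem_insert, Finset.mem_erase,
        Finset.mem_singleton, Finset.mem_inter, Function.update_apply] at *
      all_goals grind
  · obtain ⟨q, hqx, hW'q, hqc, hxc⟩ : ∃ q, q ≠ x ∧
        (∀ a, a ∈ s'.tracked ∧ a ∉ s.tracked ↔ a = q ∨ a = x) ∧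
        s'.count q = s.count z₂ ∧ s'.count x = s.count z₂ := by
      rcases (hW'v x).1 ⟨hx', hx⟩ with rfl | rfl
      · exact ⟨w, hvw.symm, fun a => (hW'v a).trans or_comm, hwc, hvc⟩
      · exact ⟨v, hvw, hW'v, hvc, hwc⟩
    have hq := (hW'q q).2 (Or.inl rfl)
    clear hW'v hwm hv hvc hwc hwr hvw hw
    rw [ssStep_of_ssEvict hx hfull hy, ssStep_of_mem hx']
    by_cases hyz : y = z₂
    · left
      refine ⟨ne_of_mem_of_not_mem' (a := z₁) (by grind) (by grind),
        z₁, q, ?_, ?_, ?_, ?_, ?_, ?_⟩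
      all_goals simp only [Finset.ext_iff, Finset.mem_sdiff, Finset.mem_insert, Finset.mem_erase,
        Finset.mem_singleton, Finset.mem_inter, Function.update_apply] at *
      all_goals grind
    · right; right
      set r' : SSState α := ⟨s'.tracked, Function.update s'.count x (s'.count x + 1),
        Function.update s'.recency x t⟩ with hr'
      obtain ⟨u, hu, huT, humin, hur⟩ := exists_ssEvict (s := r') ⟨x, hx'⟩
      refine ⟨ne_of_mem_of_not_mem' (a := z₁) (by grind) (by grind), z₁, z₂, q, y, hz,
        ?_, ?_, ?_, ?_, ?_, ?_, ?_, ?_, ?_, u, hu, ?_⟩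
      all_goals simp only [hr', Finset.ext_iff, Finset.mem_sdiff, Finset.mem_insert,
        Finset.mem_erase, Finset.mem_singleton, Finset.mem_inter, Function.update_apply] at *
      all_goals grind
  · rw [ssStep_of_ssEvict hx hfull hy, ssStep_of_ssEvict hx' hfull' hw]
    by_cases hyz : y = z₂
    · left
      refine ⟨ne_of_mem_of_not_mem' (a := z₁) (by grind) (by grind),
        z₁, v, ?_, ?_, ?_, ?_, ?_, ?_⟩
      all_goals simp only [Finset.ext_iff, Finset.mem_sdiff, Finset.mem_insert, Finset.mem_erase,
        Finset.mem_singleton, Finset.mem_inter, Function.update_apply] at *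
      all_goals grind
    · right; right
      set r' : SSState α := ⟨insert x (s'.tracked.erase w),
        Function.update (Function.update s'.count w 0) x (s'.count w + 1),
        Function.update s'.recency x t⟩ with hr'
      obtain ⟨u, hu, huT, humin, hur⟩ := exists_ssEvict (s := r') ⟨x, by simp [hr']⟩
      refine ⟨ne_of_mem_of_not_mem' (a := z₁) (by grind) (by grind),
        z₁, z₂, v, y, hz, ?_, ?_, ?_, ?_, ?_, ?_, ?_, ?_, ?_, u, hu, ?_⟩
      all_goals simp only [hr', Finset.ext_iff, Finset.mem_sdiff, Finset.mem_insert,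
        Finset.mem_erase, Finset.mem_singleton, Finset.mem_inter, Function.update_apply] at *
      all_goals grind

theorem ssRunAux_append_singleton {α : Type} [LinearOrder α] (k : ℕ) (l : List (Option α))
    (x : Option α) (s : SSState α) (t : ℕ) :
    ssRunAux k s t (l ++ [x]) = ssStep k (t + l.length) (ssRunAux k s t l) x := by
  induction l generalizing s t with
  | nil => simp [ssRunAux]
  | cons a l ih =>
    simp only [List.cons_append, ssRunAux, ih, List.length_cons]
    congr 1
    omega

theorem ssRun_take_succ {α : Type} [LinearOrder α] (k : ℕ) (l : List (Option α)) {t : ℕ}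
    (ht : t < l.length) :
    ssRun k (l.take (t + 1)) = ssStep k (1 + t) (ssRun k (l.take t)) l[t] := by
  rw [ssRun, ← List.take_concat_get' l t ht, ssRunAux_append_singleton, List.length_take,
    min_eq_left ht.le, ssRun]

theorem ssNbState_succ {α : Type} [LinearOrder α] (k : ℕ) (X : List α) {t : ℕ}
    (ht : t < X.length) :
    ssNbState k X (t + 1) = ssStep k (1 + t) (ssNbState k X t) (some X[t]) := by
  rw [ssNbState, ssRun_take_succ k _ (by simpa using ht), ssNbState, List.getElem_map]

theorem ssNbState'_succ {α : Type} [LinearOrder α] (k : ℕ) (X : List α) {i t : ℕ}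
    (hi : 1 ≤ i) (hit : i ≤ t) (ht : t < X.length) :
    ssNbState' k X i (t + 1) = ssStep k (1 + t) (ssNbState' k X i t) (some X[t]) := by
  rw [ssNbState', ssRun_take_succ k _ (by simpa using ht), ssNbState',
    List.getElem_set_ne (by omega), List.getElem_map]

theorem ssNbState'_succ_self {α : Type} [LinearOrder α] (k : ℕ) (X : List α) {j : ℕ}
    (hj : j < X.length) : ssNbState' k X (j + 1) (j + 1) = ssNbState k X j := by
  rw [ssNbState', ssRun_take_succ k _ (by simpa using hj), ssNbState]
  simp [ssStep, List.take_set_of_le]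

theorem coupled_ssNbState {α : Type} [LinearOrder α] {k : ℕ} (hk : 1 ≤ k) (X : List α) {i t : ℕ}
    (hi : 1 ≤ i) (hit : i ≤ t) (ht : t ≤ X.length) :
    Coupled k (ssNbState k X t) (ssNbState' k X i t) := by
  induction t, hit using Nat.le_induction with
  | base =>
    obtain ⟨j, rfl⟩ := Nat.exists_eq_add_of_le' hi
    rw [ssNbState'_succ_self k X ht, ssNbState_succ k X ht]
    exact coupled_ssStep_self hk _ _ _
  | succ t hit ih =>
    rw [ssNbState_succ k X ht, ssNbState'_succ k X hi hit ht]
    exact (ih (by omega)).step hk _ _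

/-- **State transition from (S4).**  If the pair of SpaceSaving states on neighboring streams is in state (S4) at time `t` (with `t ≥ i` and `t + 1 ≤ T`), then after processing the common update at position `t + 1` the pair is in state (S2), (S3), or (S4). -/
theorem ss_transition_S4 {α : Type} [LinearOrder α] (k : ℕ) (hk : 1 ≤ k)
    (X : List α) (i : ℕ) (hi1 : 1 ≤ i) (hi2 : i ≤ X.length)
    (t : ℕ) (ht1 : i ≤ t) (ht2 : t + 1 ≤ X.length)
    (h : StateS4 (ssNbState k X t) (ssNbState' k X i t)) :
    StateS2 (ssNbState k X (t + 1)) (ssNbState' k X i (t + 1)) ∨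
    StateS3 (ssNbState k X (t + 1)) (ssNbState' k X i (t + 1)) ∨
    StateS4 (ssNbState k X (t + 1)) (ssNbState' k X i (t + 1)) := by
  rw [ssNbState_succ k X ht2, ssNbState'_succ k X hi1 ht1 ht2]
  exact h.step (coupled_ssNbState hk X hi1 ht1 (by omega)) _ _
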